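/- Define θ_{A₄}(τ,z₁,…,z₄) := θ(τ,z₁)⋯θ(τ,z₄)·θ(τ,z₁+z₂+z₃+z₄) and θ_{A₆}(τ,z₁,…,z₆) := θ(τ,z₁)⋯θ(τ,z₆)·θ(τ,z₁+⋯+z₆). Then: (1) κ_{2A₄}(τ,z,z') := θ_{A₄}(τ,z)·θ_{A₄}(τ,z')/η(τ) is holomorphic on ℍ×ℂ⁸, and writing its Fourier expansion as Σ c(n,r) exp(2πi(nτ + r·(z,z'))) over n ∈ ℚ, n ≥ 0 and r ∈ (1/2)ℤ⁸, one has min{2n − rᵀG⁻¹r : c(n,r) ≠ 0} = 1/60 > 0, where G is the block-diagonal matrix diag(I₄+J₄, I₄+J₄); hence κ_{2A₄} is a Jacobi cusp form of critical weight 9/2 for 2A₄ with multiplier system v_η^5. (2) Similarly, κ_{A₄⊕A₆}(τ,z,z') := θ_{A₄}(τ,z)·θ_{A₆}(τ,z')/η(τ) is holomorphic on ℍ×ℂ¹⁰, and with G = diag(I₄+J₄, I₆+J₆) its Fourier expansion satisfies min{2n − rᵀG⁻¹r : c(n,r) ≠ 0} = 1/420 > 0; hence κ_{A₄⊕A₆}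 is a Jacobi cusp form of critical weight 11/2 for A₄⊕A₆ with multiplier system v_η^{11}. -/

import Mathlib

open Complex Matrix
open scoped Real BigOperators Classical

noncomputable section

abbrev SL2Z := Matrix.SpecialLinearGroup (Fin 2) ℤ

/-- The integral bilinear form attached to a Gram matrix `S`. -/
def bilinZ {ι : Type*} [Fintype ι] (S : Matrix ι ι ℤ) (x y : ι → ℤ) : ℤ :=
  ∑ i, ∑ j, x i * S i j * y j

def bilinQ {ι : Type*} [Fintype ι] (S : Matrix ι ι ℤ) (x y : ι → ℚ) : ℚ :=
  ∑ i, ∑ j, x i * (S i j : ℚ) * y j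

def bilinR {ι : Type*} [Fintype ι] (S : Matrix ι ι ℤ) (x y : ι → ℝ) : ℝ :=
  ∑ i, ∑ j, x i * (S i j : ℝ) * y j

def bilinC {ι : Type*} [Fintype ι] (S : Matrix ι ι ℤ) (x y : ι → ℂ) : ℂ :=
  ∑ i, ∑ j, x i * (S i j : ℂ) * y j

/-- `S` is the Gram matrix of an even positive definite lattice. -/
structure IsEvenPosDef {ι : Type*} [Fintype ι] (S : Matrix ι ι ℤ) : Prop where
  symm : S.IsSymm
  posdef : ∀ x : ι → ℚ, x ≠ 0 → 0 < bilinQ S x x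
  even_diag : ∀ i, (2 : ℤ) ∣ S i i

/-- `l ∈ (1/2) L^∨`, written in lattice coordinates:  `2(l,x) ∈ ℤ` for every lattice vector. -/
def InHalfDual {ι : Type*} [Fintype ι] (S : Matrix ι ι ℤ) (l : ι → ℚ) : Prop :=
  ∀ x : ι → ℤ, ∃ m : ℤ, 2 * bilinQ S l (fun i => (x i : ℚ)) = m

/-- `φ` is a holomorphic Jacobi form of weight `k` and index `t` for the lattice `(ℤ^ι, S)`
with `SL₂(ℤ)`-character (multiplier system) `χ`, Heisenberg character `ν`,
and Fourier coefficients `f`. -/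
structure IsJacobiForm {ι : Type*} [Fintype ι] (S : Matrix ι ι ℤ) (k t : ℚ)
    (χ : SL2Z → ℂ) (ν : (ι → ℤ) → (ι → ℤ) → ℂ)
    (f : ℚ × (ι → ℚ) → ℂ) (φ : ℂ → (ι → ℂ) → ℂ) : Prop where
  holo : DifferentiableOn ℂ (fun p : ℂ × (ι → ℂ) => φ p.1 p.2) {p | 0 < p.1.im}
  modular : ∀ A : SL2Z, ∀ τ : ℂ, 0 < τ.im → ∀ z : ι → ℂ,
    φ (((A.1 0 0 : ℂ) * τ + (A.1 0 1 : ℂ)) / ((A.1 1 0 : ℂ) * τ + (A.1 1 1 : ℂ)))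
        (fun i => z i / ((A.1 1 0 : ℂ) * τ + (A.1 1 1 : ℂ)))
      = χ A * ((A.1 1 0 : ℂ) * τ + (A.1 1 1 : ℂ)) ^ (k : ℂ)
        * Complex.exp ((π : ℂ) * I * (t : ℂ) * (A.1 1 0 : ℂ) * bilinC S z z
            / ((A.1 1 0 : ℂ) * τ + (A.1 1 1 : ℂ)))
        * φ τ z
  elliptic : ∀ x y : ι → ℤ, ∀ τ : ℂ, 0 < τ.im → ∀ z : ι → ℂ,
    φ τ (fun i => z i + (x i : ℂ) * τ + (y i : ℂ))
      = ν x y * Complex.exp (-((π : ℂ) * I * (t : ℂ))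
            * ((bilinZ S x x : ℂ) * τ + 2 * bilinC S (fun i => (x i : ℂ)) z))
        * φ τ z
  support : ∀ p : ℚ × (ι → ℚ), f p ≠ 0 →
    0 ≤ p.1 ∧ InHalfDual S p.2 ∧ 0 ≤ 2 * p.1 * t - bilinQ S p.2 p.2
  expansion : ∀ τ : ℂ, 0 < τ.im → ∀ z : ι → ℂ,
    HasSum (fun p : ℚ × (ι → ℚ) =>
        f p * Complex.exp (2 * (π : ℂ) * I *
          ((p.1 : ℂ) * τ + bilinC S (fun i => (p.2 i : ℂ)) z))) (φ τ z)

/-- The Fourier coefficients `f` are supported on indices of positive hyperbolic norm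
(cusp form condition). -/
def IsCuspSupport {ι : Type*} [Fintype ι] (S : Matrix ι ι ℤ) (t : ℚ)
    (f : ℚ × (ι → ℚ) → ℂ) : Prop :=
  ∀ p : ℚ × (ι → ℚ), f p ≠ 0 → 0 < 2 * p.1 * t - bilinQ S p.2 p.2

/-- `c` is a root of unity. -/
def HasFiniteOrder (c : ℂ) : Prop := ∃ N : ℕ, 0 < N ∧ c ^ N = 1

/-- The quadratic character mod 4. -/
def chi4 (n : ℤ) : ℂ := if n % 4 = 1 then 1 else if n % 4 = 3 then -1 else 0

/-- The classical Jacobi theta-series of characteristic `(1/2,1/2)`. -/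
def jtheta (τ z : ℂ) : ℂ :=
  ∑' n : ℤ, chi4 n *
    Complex.exp (2 * (π : ℂ) * I * (((n : ℂ) ^ 2 * τ) / 8 + (n : ℂ) * z / 2))

/-- The Dedekind eta function. -/
def dedekindEta (τ : ℂ) : ℂ :=
  Complex.exp ((π : ℂ) * I * τ / 12) *
    ∏' n : ℕ, (1 - Complex.exp (2 * (π : ℂ) * I * ((n : ℂ) + 1) * τ))

/-- Gram matrix `I_m + J_m` of the root lattice `A_m`. -/
def AmGram (m : ℕ) : Matrix (Fin m) (Fin m) ℤ :=
  Matrix.of fun i j => if i = j then 2 else 1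

/-- `θ_{A_m}(τ,z) = θ(τ,z₁)⋯θ(τ,z_m)·θ(τ,z₁+⋯+z_m)`. -/
def thetaAm (m : ℕ) : ℂ → (Fin m → ℂ) → ℂ :=
  fun τ z => (∏ i, jtheta τ (z i)) * jtheta τ (∑ i, z i)

/-- `κ_{2A₄} = θ_{A₄} ⊗ θ_{A₄} / η`. -/
def kappa2A4 : ℂ → (Fin 4 ⊕ Fin 4 → ℂ) → ℂ :=
  fun τ z => thetaAm 4 τ (z ∘ Sum.inl) * thetaAm 4 τ (z ∘ Sum.inr) / dedekindEta τ

/-- `κ_{A₄⊕A₆} = θ_{A₄} ⊗ θ_{A₆} / η`. -/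
def kappaA4A6 : ℂ → (Fin 4 ⊕ Fin 6 → ℂ) → ℂ :=
  fun τ z => thetaAm 4 τ (z ∘ Sum.inl) * thetaAm 6 τ (z ∘ Sum.inr) / dedekindEta τ


lemma chi4_norm_le (n : ℤ) : ‖chi4 n‖ ≤ 1 := by
  unfold chi4; split_ifs <;> simp

lemma chi4_ne_zero {n : ℤ} (h : chi4 n ≠ 0) : n % 2 = 1 := by
  unfold chi4 at h; split_ifs at h <;> first | omega | simp at h

lemma chi4_odd_ne {n : ℤ} (h : n % 2 = 1) : chi4 n ≠ 0 := by
  unfold chi4; split_ifs <;> first | omega | simp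

lemma exp_pi_even (k : ℤ) : Complex.exp ((π : ℂ) * I * (2 * (k : ℂ))) = 1 := by
  rw [Complex.exp_eq_one_iff]; exact ⟨k, by ring⟩

lemma exp_pi_odd (k : ℤ) : Complex.exp ((π : ℂ) * I * (2 * (k : ℂ) + 1)) = -1 := by
  rw [mul_add, Complex.exp_add, exp_pi_even, mul_one, Complex.exp_pi_mul_I, one_mul]

lemma chi4_odd (m : ℤ) : chi4 (2 * m + 1) = Complex.exp ((π : ℂ) * I * m) := by
  rcases Int.even_or_odd' m with ⟨k, rfl | rfl⟩
  · push_cast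
    rw [exp_pi_even, chi4, if_pos (by omega)]
  · push_cast
    rw [exp_pi_odd, chi4, if_neg (by omega), if_pos (by omega)]

lemma chi4_shift (n x : ℤ) : chi4 (n + 2 * x) * Complex.exp ((π : ℂ) * I * x) = chi4 n := by
  rcases Int.even_or_odd' x with ⟨k, rfl | rfl⟩
  · push_cast
    rw [exp_pi_even, mul_one]
    unfold chi4
    split_ifs <;> first | omega | rfl
  · push_cast
    rw [exp_pi_odd]
    unfold chi4
    split_ifs <;> first | omega | simp

lemma chi4_mul_exp (n y : ℤ) : chi4 n * Complex.exp ((π : ℂ) * I * (n * y))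
    = chi4 n * Complex.exp ((π : ℂ) * I * y) := by
  rcases Int.even_or_odd' n with ⟨k, rfl | rfl⟩
  · rw [chi4, if_neg (by omega), if_neg (by omega)]; simp
  · push_cast
    have : (π : ℂ) * I * ((2 * (k : ℂ) + 1) * y) = (π : ℂ) * I * (2 * ((k * y : ℤ) : ℂ))
        + (π : ℂ) * I * y := by push_cast; ring
    rw [this, Complex.exp_add, exp_pi_even, one_mul]

/-- the terms of the theta series -/
def thetaTerm (τ z : ℂ) (n : ℤ) : ℂ := chi4 n *
    Complex.exp (2 * (π : ℂ) * I * (((n : ℂ) ^ 2 * τ) / 8 + (n : ℂ) * z / 2))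

lemma summable_thetaTerm (τ z : ℂ) (hτ : 0 < τ.im) : Summable (fun n => ‖thetaTerm τ z n‖) := by
  have h4 : 0 < (τ / 4).im := by
    rw [show τ / 4 = τ / ((4 : ℝ) : ℂ) by norm_num, Complex.div_ofReal_im]; positivity
  have h := ((summable_jacobiTheta₂_term_iff (z / 2) (τ / 4)).2 h4).norm
  refine Summable.of_nonneg_of_le (fun _ => norm_nonneg _) (fun n => ?_) h
  rw [thetaTerm, norm_mul, jacobiTheta₂_term]
  refine (mul_le_of_le_one_left (norm_nonneg _) (chi4_norm_le n)).trans (le_of_eq ?_)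
  congr 2; ring

lemma hasSum_thetaTerm (τ z : ℂ) (hτ : 0 < τ.im) : HasSum (thetaTerm τ z) (jtheta τ z) :=
  (summable_thetaTerm τ z hτ).of_norm.hasSum

lemma jtheta_eq (τ z : ℂ) : jtheta τ z =
    Complex.exp ((π : ℂ) * I * (τ / 4 + z)) * jacobiTheta₂ (z + τ / 2 + 1 / 2) τ := by
  have inj : Function.Injective (fun m : ℤ => 2 * m + 1) := fun a b h => by
    simp only at h; omega
  unfold jtheta jacobiTheta₂
  rw [← tsum_mul_left, ← inj.tsum_eq]
  · refine tsum_congr fun m => ?_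
    rw [chi4_odd, jacobiTheta₂_term, ← Complex.exp_add, ← Complex.exp_add]
    congr 1; push_cast; ring
  · intro n hn
    have : chi4 n ≠ 0 := fun h => hn (by simp [h])
    have := chi4_ne_zero this
    exact ⟨n / 2, by simp only; omega⟩

lemma jtheta_elliptic (τ z : ℂ) (x y : ℤ) : jtheta τ (z + x * τ + y) =
    Complex.exp ((π : ℂ) * I * (x + y)) *
    Complex.exp (-((π : ℂ) * I) * ((x : ℂ) ^ 2 * τ + 2 * (x * z))) * jtheta τ z := by
  unfold jtheta
  rw [← tsum_mul_left, ← (Equiv.addRight (2 * x)).tsum_eq (fun n => _ * (chi4 n * _))]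
  refine tsum_congr fun n => ?_
  rw [← chi4_shift n x]
  simp only [Equiv.coe_addRight]
  have h := chi4_mul_exp (n + 2 * x) y
  have e1 : Complex.exp ((π : ℂ) * I * (x + y)) = Complex.exp ((π : ℂ) * I * x) *
    Complex.exp ((π : ℂ) * I * y) := by rw [← Complex.exp_add]; congr 1; ring
  have e2 : Complex.exp (2 * (π : ℂ) * I * (((n : ℂ) ^ 2 * τ) / 8 + (n : ℂ) * (z + x * τ + y) / 2))
    = Complex.exp ((π : ℂ) * I * (((n + 2 * x : ℤ) : ℂ) * y)) *
     (Complex.exp (-((π : ℂ) * I) * ((x : ℂ) ^ 2 * τ + 2 * (x * z))) *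
     Complex.exp (2 * (π : ℂ) * I * ((((n + 2 * x : ℤ) : ℂ) ^ 2 * τ) / 8
       + ((n + 2 * x : ℤ) : ℂ) * z / 2)))  := by
    have := exp_pi_even (-(x * y))
    rw [← mul_one (Complex.exp (2 * (π : ℂ) * I * (((n : ℂ) ^ 2 * τ) / 8 + _))),
      ← exp_pi_even (x * y)]
    simp only [← Complex.exp_add]
    congr 1; push_cast; ring
  rw [e1, e2]
  linear_combination (Complex.exp ((π : ℂ) * I * x)) *
    (Complex.exp (-((π : ℂ) * I) * ((x : ℂ) ^ 2 * τ + 2 * (x * z))) *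
     Complex.exp (2 * (π : ℂ) * I * ((((n + 2 * x : ℤ) : ℂ) ^ 2 * τ) / 8
       + ((n + 2 * x : ℤ) : ℂ) * z / 2))) * h

lemma jtheta_differentiable (τ z : ℂ) (hτ : 0 < τ.im) :
    DifferentiableAt ℂ (fun p : ℂ × ℂ => jtheta p.1 p.2) (τ, z) := by
  simp_rw [jtheta_eq]
  refine DifferentiableAt.mul (by fun_prop) ?_
  have h := (hasFDerivAt_jacobiTheta₂ (z + τ / 2 + 1 / 2) hτ).differentiableAt
  exact h.comp (τ, z) (f := fun p : ℂ × ℂ => (p.2 + p.1 / 2 + 1 / 2, p.1)) (by fun_prop)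

lemma jtheta_T (τ z : ℂ) : jtheta (τ + 1) z = Complex.exp ((π : ℂ) * I / 4) * jtheta τ z := by
  unfold jtheta
  rw [← tsum_mul_left]
  refine tsum_congr fun n => ?_
  by_cases h : chi4 n = 0
  · simp [h]
  obtain ⟨k, rfl⟩ : ∃ k, n = 2 * k + 1 := ⟨n / 2, by have := chi4_ne_zero h; omega⟩
  obtain ⟨j, hj⟩ : ∃ j, k * (k + 1) = 2 * j := by
    obtain ⟨j, hj⟩ := Int.even_mul_succ_self k; exact ⟨j, by omega⟩
  have hj' : (k : ℂ) * (k + 1) = 2 * j := by exact_mod_cast hj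
  rw [mul_left_comm, ← Complex.exp_add]
  congr 1
  refine Eq.trans ?_ ((congrArg (_ * ·) (exp_pi_even j)).trans (mul_one _))
  rw [← Complex.exp_add]
  congr 1; push_cast
  linear_combination (π : ℂ) * I * hj'

lemma jtheta_S (τ z : ℂ) (hτ : 0 < τ.im) : jtheta (-1 / τ) (z / τ) =
    -I * (-I * τ) ^ (1 / 2 : ℂ) * Complex.exp ((π : ℂ) * I * z ^ 2 / τ) * jtheta τ z := by
  have h0 : τ ≠ 0 := by rintro rfl; simp at hτ
  have hu : (-I * τ) ^ (1 / 2 : ℂ) ≠ 0 := by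
    rw [Complex.cpow_ne_zero_iff]; left; simp [h0]
  rw [jtheta_eq, jtheta_eq]
  have h := jacobiTheta₂_functional_equation (z + τ / 2 - 1 / 2) τ
  have h1 : z + τ / 2 + 1 / 2 = (z + τ / 2 - 1 / 2) + 1 := by ring
  rw [h1, jacobiTheta₂_add_left, h]
  have h2 : (z + τ / 2 - 1 / 2) / τ = z / τ + -1 / τ / 2 + 1 / 2 := by field_simp; ring
  rw [h2]
  have h3 : Complex.exp ((π : ℂ) * I * (-1 / τ / 4 + z / τ)) =
    -I * Complex.exp ((π : ℂ) * I * z ^ 2 / τ) * Complex.exp ((π : ℂ) * I * (τ / 4 + z)) *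
    Complex.exp (-π * I * (z + τ / 2 - 1 / 2) ^ 2 / τ) := by
    have : -I = Complex.exp (-(π / 2 * I)) := by
      rw [Complex.exp_neg, Complex.exp_pi_div_two_mul_I, Complex.inv_I]
    rw [this]
    simp only [← Complex.exp_add]
    congr 1; field_simp; ring
  rw [h3]
  field_simp

lemma eta_eq (τ : ℂ) : dedekindEta τ = ModularForm.eta τ := by
  unfold dedekindEta ModularForm.eta
  congr 1
  · rw [Function.Periodic.qParam]; congr 1; push_cast; ring
  · simp_rw [ModularForm.eta_q_eq_cexp]

lemma eta_ne {τ : ℂ} (hτ : 0 < τ.im) : dedekindEta τ ≠ 0 := by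
  rw [eta_eq]; exact ModularForm.eta_ne_zero hτ

lemma eta_diff {τ : ℂ} (hτ : 0 < τ.im) : DifferentiableAt ℂ dedekindEta τ := by
  rw [funext eta_eq]; exact ModularForm.differentiableAt_eta_of_mem_upperHalfPlaneSet hτ

lemma eta_T (τ : ℂ) : dedekindEta (τ + 1) = Complex.exp ((π : ℂ) * I / 12) * dedekindEta τ := by
  unfold dedekindEta
  rw [← mul_assoc, ← Complex.exp_add]
  congr 1
  · congr 1; ring
  · refine tprod_congr fun n => ?_
    congr 1
    have : 2 * (π : ℂ) * I * ((n : ℂ) + 1) * (τ + 1) = 2 * (π : ℂ) * I * ((n : ℂ) + 1) * τ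
      + (π : ℂ) * I * (2 * ((n + 1 : ℤ) : ℂ)) := by push_cast; ring
    rw [this, Complex.exp_add, exp_pi_even, mul_one]

lemma eta_S (τ : ℂ) (hτ : 0 < τ.im) :
    dedekindEta (-1 / τ) = (-I * τ) ^ (1 / 2 : ℂ) * dedekindEta τ := by
  have h0 : τ ≠ 0 := by rintro rfl; simp at hτ
  have h := ModularForm.eta_comp_eq_csqrt_I_inv hτ
  simp only [Function.comp, Pi.smul_apply, Pi.mul_apply, smul_eq_mul] at h
  rw [eta_eq, eta_eq, h, ← mul_assoc]
  congr 1
  rw [_root_.sqrt_eq_exp h0, _root_.sqrt_eq_exp I_ne_zero, ← Complex.exp_neg, ← Complex.exp_add,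
    Complex.cpow_def_of_ne_zero (by simp [h0]), Complex.log_mul (by simp) h0, Complex.log_I,
    Complex.log_neg_I]
  · congr 1; ring
  · rw [Complex.arg_neg_I]
    have h1 : 0 ≤ τ.arg := Complex.arg_nonneg_iff.2 hτ.le
    have h2 := Complex.arg_le_pi τ
    have := Real.pi_pos
    constructor <;> linarith

lemma u_sq (τ : ℂ) : ((-I * τ) ^ (1 / 2 : ℂ)) ^ 2 = -I * τ := by
  rw [← Complex.cpow_nat_mul]; norm_num

def jA (A : SL2Z) (τ : ℂ) : ℂ := (A.1 1 0 : ℂ) * τ + (A.1 1 1 : ℂ)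
def mA (A : SL2Z) (τ : ℂ) : ℂ := ((A.1 0 0 : ℂ) * τ + (A.1 0 1 : ℂ)) / jA A τ

lemma detA (A : SL2Z) : (A.1 0 0 : ℂ) * A.1 1 1 - A.1 0 1 * A.1 1 0 = 1 := by
  have := A.2
  rw [Matrix.det_fin_two] at this
  exact_mod_cast this

lemma jA_ne (A : SL2Z) {τ : ℂ} (hτ : 0 < τ.im) : jA A τ ≠ 0 := by
  intro h
  have him : ((A.1 1 0 : ℤ) : ℝ) * τ.im = 0 := by
    have := congrArg Complex.im h
    simpa [jA] using this
  have hc : A.1 1 0 = 0 := by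
    rcases mul_eq_zero.1 him with h | h
    · exact_mod_cast h
    · exact absurd h hτ.ne'
  have hd : (A.1 1 1 : ℂ) = 0 := by simpa [jA, hc] using h
  have := detA A
  rw [hd, hc] at this
  simp at this

lemma mA_im (A : SL2Z) {τ : ℂ} (hτ : 0 < τ.im) : 0 < (mA A τ).im := by
  have hj := jA_ne A hτ
  have hd := A.2
  rw [Matrix.det_fin_two] at hd
  have hd' : (A.1 0 0 : ℝ) * A.1 1 1 - A.1 0 1 * A.1 1 0 = 1 := by exact_mod_cast hd
  have : (mA A τ).im = τ.im / Complex.normSq (jA A τ) := by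
    rw [mA, Complex.div_im, ← sub_div]
    congr 1
    simp [jA]
    linear_combination τ.im * hd'
  rw [this]
  exact div_pos hτ (Complex.normSq_pos.2 hj)

lemma jA_mul (A B : SL2Z) {τ : ℂ} (hτ : 0 < τ.im) :
    jA (A * B) τ = jA A (mA B τ) * jA B τ := by
  have hj := jA_ne B hτ
  rw [jA, mA]
  nth_rw 1 [jA]
  rw [add_mul, mul_div_assoc', div_mul_cancel₀ _ hj]
  simp [jA, Matrix.mul_apply, Fin.sum_univ_two]
  ring

lemma mA_mul (A B : SL2Z) {τ : ℂ} (hτ : 0 < τ.im) :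
    mA (A * B) τ = mA A (mA B τ) := by
  have hj := jA_ne B hτ
  have hj2 := jA_ne A (mA_im B hτ)
  rw [mA, jA_mul A B hτ]
  nth_rw 2 [mA]
  rw [div_eq_div_iff (mul_ne_zero hj2 hj) hj2]
  have : ((A.1 0 0 : ℂ) * mA B τ + A.1 0 1) * jA B τ =
    (((A * B).1 0 0 : ℂ) * τ + ((A * B).1 0 1 : ℂ)) := by
    rw [mA, add_mul, mul_div_assoc', div_mul_cancel₀ _ hj]
    simp [jA, Matrix.mul_apply, Fin.sum_univ_two]
    ring
  rw [← this]; ring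

lemma jA_one (τ : ℂ) : jA 1 τ = 1 := by simp [jA]
lemma mA_one (τ : ℂ) : mA 1 τ = τ := by simp [mA, jA_one]

/-- transformation law of weight `k` and index `t/2` -/
def Transf (F : ℂ → ℂ → ℂ) (k : ℤ) (t : ℂ) (A : SL2Z) : Prop :=
  ∀ τ : ℂ, 0 < τ.im → ∀ z : ℂ, F (mA A τ) (z / jA A τ) =
    jA A τ ^ k * Complex.exp ((π : ℂ) * I * t * (A.1 1 0 : ℂ) * z ^ 2 / jA A τ) * F τ z

lemma cocycle_c (A B : SL2Z) {τ : ℂ} (hτ : 0 < τ.im) (z : ℂ) :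
    ((A * B).1 1 0 : ℂ) * z ^ 2 / jA (A * B) τ = (A.1 1 0 : ℂ) * (z / jA B τ) ^ 2 / jA A (mA B τ)
      + (B.1 1 0 : ℂ) * z ^ 2 / jA B τ := by
  have hj := jA_ne B hτ
  have hj2 := jA_ne A (mA_im B hτ)
  have key : ((A * B).1 1 0 : ℂ) * jA B τ = (A.1 1 0 : ℂ) + (B.1 1 0 : ℂ) * jA (A * B) τ := by
    have := detA B
    simp [jA, Matrix.mul_apply, Fin.sum_univ_two]
    linear_combination (A.1 1 0 : ℂ) * this
  rw [jA_mul A B hτ] at key ⊢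
  field_simp
  linear_combination z ^ 2 * key

lemma Transf.mul {F : ℂ → ℂ → ℂ} {k : ℤ} {t : ℂ} {A B : SL2Z} (hA : Transf F k t A)
    (hB : Transf F k t B) : Transf F k t (A * B) := by
  intro τ hτ z
  have hj := jA_ne B hτ
  have hj2 := jA_ne A (mA_im B hτ)
  have e : z / jA (A * B) τ = (z / jA B τ) / jA A (mA B τ) := by
    rw [jA_mul A B hτ]; field_simp
  rw [mA_mul A B hτ, e, hA _ (mA_im B hτ), hB _ hτ]
  have h := cocycle_c A B hτ z
  have e2 : (π : ℂ) * I * t * ((A * B).1 1 0 : ℂ) * z ^ 2 / jA (A * B) τ =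
     (π : ℂ) * I * t * (A.1 1 0 : ℂ) * (z / jA B τ) ^ 2 / jA A (mA B τ)
      + (π : ℂ) * I * t * (B.1 1 0 : ℂ) * z ^ 2 / jA B τ := by
    linear_combination (π : ℂ) * I * t * h
  rw [e2, Complex.exp_add, jA_mul A B hτ, mul_zpow]
  ring

lemma Transf.inv {F : ℂ → ℂ → ℂ} {k : ℤ} {t : ℂ} {A : SL2Z} (hA : Transf F k t A) :
    Transf F k t A⁻¹ := by
  intro τ hτ z
  have hj := jA_ne A⁻¹ hτ
  have hj2 := jA_ne A (mA_im A⁻¹ hτ)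
  have h1 : jA A (mA A⁻¹ τ) * jA A⁻¹ τ = 1 := by
    rw [← jA_mul A A⁻¹ hτ, mul_inv_cancel, jA_one]
  have h2 : mA A (mA A⁻¹ τ) = τ := by
    rw [← mA_mul A A⁻¹ hτ, mul_inv_cancel, mA_one]
  have h := hA _ (mA_im A⁻¹ hτ) (z / jA A⁻¹ τ)
  rw [h2, div_div, mul_comm (jA A⁻¹ τ), h1, div_one] at h
  have hc := cocycle_c A A⁻¹ hτ z
  rw [mul_inv_cancel] at hc
  have hc1 : (((1 : SL2Z).1 1 0 : ℤ) : ℂ) = 0 := by simp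
  rw [hc1, zero_mul, zero_div] at hc
  rw [h]
  have e : Complex.exp ((π : ℂ) * I * t * (A⁻¹.1 1 0 : ℂ) * z ^ 2 / jA A⁻¹ τ) *
    Complex.exp ((π : ℂ) * I * t * (A.1 1 0 : ℂ) * (z / jA A⁻¹ τ) ^ 2 / jA A (mA A⁻¹ τ)) = 1 := by
    rw [← Complex.exp_add, Complex.exp_eq_one_iff]
    exact ⟨0, by push_cast; linear_combination -(π : ℂ) * I * t * hc⟩
  have e3 : jA A⁻¹ τ ^ k * jA A (mA A⁻¹ τ) ^ k = 1 := by
    rw [← mul_zpow, mul_comm, h1, _root_.one_zpow]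
  linear_combination (-(F (mA A⁻¹ τ) (z / jA A⁻¹ τ))) * ((jA A⁻¹ τ ^ k * jA A (mA A⁻¹ τ) ^ k) * e
     + e3)

lemma Transf.all {F : ℂ → ℂ → ℂ} {k : ℤ} {t : ℂ}
    (hS : ∀ τ : ℂ, 0 < τ.im → ∀ z : ℂ, F (-1 / τ) (z / τ) =
      τ ^ k * Complex.exp ((π : ℂ) * I * t * z ^ 2 / τ) * F τ z)
    (hT : ∀ τ : ℂ, 0 < τ.im → ∀ z : ℂ, F (τ + 1) z = F τ z) (A : SL2Z) : Transf F k t A := by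
  have : A ∈ Subgroup.closure {ModularGroup.S, ModularGroup.T} := by
    simp [SpecialLinearGroup.SL2Z_generators]
  induction this using Subgroup.closure_induction with
  | one =>
    intro τ hτ z
    simp [jA_one, mA_one]
  | mem g hg =>
    rcases hg with rfl | rfl
    · intro τ hτ z
      simpa [jA, mA, ModularGroup.S] using hS τ hτ z
    · intro τ hτ z
      simpa [jA, mA, ModularGroup.T] using hT τ hτ z
  | mul g h _ _ ig ih => exact ig.mul ih
  | inv g _ ig => exact ig.inv

lemma psi_transf (A : SL2Z) :
    Transf (fun τ z => jtheta τ z / dedekindEta τ ^ 3) (-1) 1 A := by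
  apply Transf.all
  · intro τ hτ z
    have h0 : τ ≠ 0 := by rintro rfl; simp at hτ
    have hu : (-I * τ) ^ (1 / 2 : ℂ) ≠ 0 := by
      rw [Complex.cpow_ne_zero_iff]; left; simp [h0]
    rw [jtheta_S τ z hτ, eta_S τ hτ]
    have he := eta_ne hτ
    have h2 := u_sq τ
    set u := (-I * τ) ^ (1 / 2 : ℂ)
    rw [_root_.zpow_neg_one, mul_one, mul_pow, pow_succ u 2, h2]
    have := I_ne_zero
    field_simp
  · intro τ hτ z
    rw [jtheta_T, eta_T, mul_pow, ← Complex.exp_nat_mul]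
    have he := eta_ne hτ
    have e : ((3 : ℕ) : ℂ) * (π * I / 12) = π * I / 4 := by push_cast; ring
    rw [e]
    have := Complex.exp_ne_zero ((π : ℂ) * I / 4)
    field_simp

lemma eta24_transf (A : SL2Z) :
    Transf (fun τ _ => dedekindEta τ ^ 24) 12 0 A := by
  apply Transf.all
  · intro τ hτ z
    have h2 := u_sq τ
    rw [eta_S τ hτ, mul_pow, show 24 = 2 * 12 from rfl, pow_mul _ 2 12, h2, mul_pow]
    have : (-I) ^ 12 = 1 := by
      rw [show 12 = 4 * 3 from rfl, pow_mul, neg_pow, I_pow_four]; norm_num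
    rw [this]
    simp
  · intro τ hτ z
    rw [eta_T, mul_pow, ← Complex.exp_nat_mul]
    have e : ((24 : ℕ) : ℂ) * (π * I / 12) = 2 * π * I := by push_cast; ring
    rw [e, Complex.exp_two_pi_mul_I, one_mul]

def kap (a b : ℕ) : ℂ → (Fin a ⊕ Fin b → ℂ) → ℂ :=
  fun τ z => thetaAm a τ (z ∘ Sum.inl) * thetaAm b τ (z ∘ Sum.inr) / dedekindEta τ

lemma sum_AmGram {R : Type*} [CommRing R] (m : ℕ) (x y : Fin m → R) :
    ∑ i, ∑ j, x i * ((AmGram m i j : ℤ) : R) * y j = ∑ i, x i * y i + (∑ i, x i) * ∑ i, y i := by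
  rw [Finset.sum_mul_sum, ← Finset.sum_add_distrib]
  refine Finset.sum_congr rfl fun i _ => ?_
  have : ∀ j, x i * ((AmGram m i j : ℤ) : R) * y j = (if i = j then x i * y j else 0) + x i * y j := by
    intro j
    simp only [AmGram, Matrix.of_apply]
    split_ifs <;> push_cast <;> ring
  simp_rw [this, Finset.sum_add_distrib]
  simp

lemma sum_blocks {R : Type*} [CommRing R] (a b : ℕ) (x y : Fin a ⊕ Fin b → R) :
    ∑ i, ∑ j, x i * ((Matrix.fromBlocks (AmGram a) 0 0 (AmGram b) i j : ℤ) : R) * y j =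
    (∑ i, x (.inl i) * y (.inl i) + (∑ i, x (.inl i)) * ∑ i, y (.inl i)) +
    (∑ i, x (.inr i) * y (.inr i) + (∑ i, x (.inr i)) * ∑ i, y (.inr i)) := by
  simp only [Fintype.sum_sum_type, Matrix.fromBlocks_apply₁₁, Matrix.fromBlocks_apply₁₂,
    Matrix.fromBlocks_apply₂₁, Matrix.fromBlocks_apply₂₂, Matrix.zero_apply, Int.cast_zero,
    mul_zero, zero_mul, Finset.sum_const_zero, add_zero, zero_add]
  rw [sum_AmGram a (fun i => x (.inl i)) (fun i => y (.inl i)),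
    sum_AmGram b (fun i => x (.inr i)) (fun i => y (.inr i))]

lemma jtheta_mod (A : SL2Z) {τ : ℂ} (hτ : 0 < τ.im) (z : ℂ) :
    jtheta (mA A τ) (z / jA A τ) = dedekindEta (mA A τ) ^ 3 / dedekindEta τ ^ 3 * (jA A τ)⁻¹ *
      (Complex.exp ((π : ℂ) * I * (A.1 1 0 : ℂ) / jA A τ * z ^ 2) * jtheta τ z) := by
  have h := psi_transf A τ hτ z
  have h1 := eta_ne hτ
  have h2 := eta_ne (mA_im A hτ)
  have hj := jA_ne A hτ
  simp only [_root_.zpow_neg_one, mul_one] at h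
  rw [div_eq_iff (pow_ne_zero 3 h2)] at h
  rw [h, div_mul_eq_mul_div _ _ (z ^ 2)]
  field_simp

lemma thetaAm_mod (m : ℕ) (A : SL2Z) {τ : ℂ} (hτ : 0 < τ.im) (z : Fin m → ℂ) :
    thetaAm m (mA A τ) (fun i => z i / jA A τ) =
      (dedekindEta (mA A τ) ^ 3 / dedekindEta τ ^ 3 * (jA A τ)⁻¹) ^ (m + 1) *
      Complex.exp ((π : ℂ) * I * (A.1 1 0 : ℂ) / jA A τ * (∑ i, z i * z i + (∑ i, z i) * ∑ i, z i))
       * thetaAm m τ z := by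
  unfold thetaAm
  rw [← Finset.sum_div, jtheta_mod A hτ]
  simp_rw [jtheta_mod A hτ]
  rw [Finset.prod_mul_distrib, Finset.prod_const, Finset.prod_mul_distrib, Finset.card_univ,
    Fintype.card_fin, ← Complex.exp_sum, mul_add, Complex.exp_add, Finset.mul_sum]
  simp only [← pow_two]
  ring

lemma thetaAm_ell (m : ℕ) (τ : ℂ) (z : Fin m → ℂ) (x y : Fin m → ℤ) :
    thetaAm m τ (fun i => z i + x i * τ + y i) =
      Complex.exp (-((π : ℂ) * I) * ((∑ i, (x i : ℂ) * x i + (∑ i, (x i : ℂ)) * ∑ i, (x i : ℂ)) * τ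
        + 2 * (∑ i, (x i : ℂ) * z i + (∑ i, (x i : ℂ)) * ∑ i, z i))) * thetaAm m τ z := by
  unfold thetaAm
  have e : ∑ i, (z i + x i * τ + y i) = ∑ i, z i + ((∑ i, x i : ℤ) : ℂ) * τ + ((∑ i, y i : ℤ) : ℂ) := by
    push_cast
    rw [Finset.sum_add_distrib, Finset.sum_add_distrib, Finset.sum_mul]
  rw [e, jtheta_elliptic]
  simp_rw [jtheta_elliptic]
  rw [Finset.prod_mul_distrib, Finset.prod_mul_distrib, ← Complex.exp_sum, ← Complex.exp_sum]
  have : Complex.exp (∑ i, (π : ℂ) * I * (x i + y i)) *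
     Complex.exp ((π : ℂ) * I * (((∑ i, x i : ℤ) : ℂ) + ((∑ i, y i : ℤ) : ℂ))) = 1 := by
    rw [← exp_pi_even (∑ i, x i + ∑ i, y i), ← Complex.exp_add]
    congr 1
    push_cast
    rw [← Finset.mul_sum, Finset.sum_add_distrib]; ring
  have e2 : Complex.exp (-((π : ℂ) * I) * ((∑ i, (x i : ℂ) * x i + (∑ i, (x i : ℂ)) * ∑ i, (x i : ℂ)) * τ
        + 2 * (∑ i, (x i : ℂ) * z i + (∑ i, (x i : ℂ)) * ∑ i, z i))) =
     Complex.exp (∑ i, -((π : ℂ) * I) * ((x i : ℂ) ^ 2 * τ + 2 * (x i * z i))) *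
     Complex.exp (-((π : ℂ) * I) * (((∑ i, x i : ℤ) : ℂ) ^ 2 * τ
       + 2 * (((∑ i, x i : ℤ) : ℂ) * ∑ i, z i))) := by
    rw [← Complex.exp_add]
    congr 1
    push_cast
    rw [← Finset.mul_sum, Finset.sum_add_distrib, ← Finset.mul_sum, ← Finset.sum_mul]
    simp only [← pow_two]
    ring
  rw [e2]
  linear_combination (Complex.exp (∑ i, -((π : ℂ) * I) * ((x i : ℂ) ^ 2 * τ + 2 * (x i * z i))) *
     Complex.exp (-((π : ℂ) * I) * (((∑ i, x i : ℤ) : ℂ) ^ 2 * τ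
       + 2 * (((∑ i, x i : ℤ) : ℂ) * ∑ i, z i))) * (∏ i, jtheta τ (z i)) * jtheta τ (∑ i, z i)) * this

lemma diff_prod {ι E : Type*} [NormedAddCommGroup E] [NormedSpace ℂ E] (s : Finset ι)
    (f : ι → E → ℂ) (e : E) (h : ∀ i, DifferentiableAt ℂ (f i) e) :
    DifferentiableAt ℂ (fun e => ∏ i ∈ s, f i e) e := by
  induction s using Finset.induction_on with
  | empty => simp
  | insert i s hi ih =>
    simp_rw [Finset.prod_insert hi]
    exact (h i).mul ih

lemma thetaAm_diff (m : ℕ) {E : Type*} [NormedAddCommGroup E] [NormedSpace ℂ E] (f : E → ℂ)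
    (g : E → Fin m → ℂ) (e : E) (hf : DifferentiableAt ℂ f e) (hg : DifferentiableAt ℂ g e)
    (h : 0 < (f e).im) : DifferentiableAt ℂ (fun e => thetaAm m (f e) (g e)) e := by
  have hg' : ∀ i, DifferentiableAt ℂ (fun e => g e i) e := differentiableAt_pi.1 hg
  unfold thetaAm
  refine DifferentiableAt.mul (diff_prod Finset.univ _ e fun i => ?_) ?_
  · exact (jtheta_differentiable (f e) (g e i) h).comp e (hf.prodMk (hg' i))
  · exact (jtheta_differentiable (f e) (∑ i, g e i) h).comp e
      (hf.prodMk (DifferentiableAt.fun_sum fun i _ => hg' i))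

lemma kap_holo (a b : ℕ) :
    DifferentiableOn ℂ (fun p : ℂ × (Fin a ⊕ Fin b → ℂ) => kap a b p.1 p.2) {p | 0 < p.1.im} := by
  intro p hp
  apply DifferentiableAt.differentiableWithinAt
  unfold kap
  have h2 : ∀ j, DifferentiableAt ℂ (fun p : ℂ × (Fin a ⊕ Fin b → ℂ) => p.2 j) p :=
    fun j => by fun_prop
  simp only [div_eq_mul_inv]
  refine DifferentiableAt.mul (DifferentiableAt.mul ?_ ?_) ?_
  · exact thetaAm_diff a _ _ p differentiableAt_fst (differentiableAt_pi.2 fun i => h2 _) hp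
  · exact thetaAm_diff b _ _ p differentiableAt_fst (differentiableAt_pi.2 fun i => h2 _) hp
  · exact ((eta_diff hp).inv (eta_ne hp)).comp p differentiableAt_fst

lemma kap_ell (a b : ℕ) (x y : Fin a ⊕ Fin b → ℤ) (τ : ℂ) (z : Fin a ⊕ Fin b → ℂ) :
    kap a b τ (fun i => z i + (x i : ℂ) * τ + (y i : ℂ))
      = 1 * Complex.exp (-((π : ℂ) * I * ((1 : ℚ) : ℂ))
            * ((bilinZ (Matrix.fromBlocks (AmGram a) 0 0 (AmGram b)) x x : ℂ) * τ
              + 2 * bilinC (Matrix.fromBlocks (AmGram a) 0 0 (AmGram b)) (fun i => (x i : ℂ)) z))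
        * kap a b τ z := by
  have hZ := sum_blocks a b x x
  rw [bilinZ, bilinC, sum_blocks a b (fun i => (x i : ℂ)) z]
  simp only [Int.cast_id] at hZ
  rw [hZ]
  unfold kap
  have h1 := thetaAm_ell a τ (z ∘ Sum.inl) (x ∘ Sum.inl) (y ∘ Sum.inl)
  have h2 := thetaAm_ell b τ (z ∘ Sum.inr) (x ∘ Sum.inr) (y ∘ Sum.inr)
  simp only [Function.comp_def] at h1 h2 ⊢
  rw [h1, h2, one_mul, mul_mul_mul_comm, ← Complex.exp_add, mul_div_assoc]
  congr 2
  push_cast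
  ring

lemma kap_mod (a b N : ℕ) (hN : 3 * (a + b + 2) = 25 + N) (k : ℚ)
    (hk : k = N / 2 + 12 - (a + b + 2)) (v : SL2Z → ℂ)
    (hv : ∀ A : SL2Z, ∀ τ : ℂ, 0 < τ.im → dedekindEta (mA A τ) ^ N
        = v A * (jA A τ) ^ (((N : ℕ) : ℂ) / 2) * dedekindEta τ ^ N)
    (A : SL2Z) (τ : ℂ) (hτ : 0 < τ.im) (z : Fin a ⊕ Fin b → ℂ) :
    kap a b (mA A τ) (fun i => z i / jA A τ)
      = v A * jA A τ ^ (k : ℂ)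
        * Complex.exp ((π : ℂ) * I * ((1 : ℚ) : ℂ) * (A.1 1 0 : ℂ) *
            bilinC (Matrix.fromBlocks (AmGram a) 0 0 (AmGram b)) z z / jA A τ)
        * kap a b τ z := by
  rw [bilinC, sum_blocks a b z z]
  unfold kap
  have h1 := thetaAm_mod a A hτ (z ∘ Sum.inl)
  have h2 := thetaAm_mod b A hτ (z ∘ Sum.inr)
  have h24 := eta24_transf A τ hτ 0
  have hN' := hv A τ hτ
  have e1 := eta_ne hτ
  have e2 := eta_ne (mA_im A hτ)
  have hj := jA_ne A hτ
  simp only [Function.comp_def] at h1 h2 ⊢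
  rw [h1, h2]
  have hk' : jA A τ ^ (k : ℂ) * jA A τ ^ (a + b + 2) = jA A τ ^ ((N : ℂ) / 2) * jA A τ ^ 12 := by
    rw [← Complex.cpow_natCast, ← Complex.cpow_natCast, ← Complex.cpow_add _ _ hj,
      ← Complex.cpow_add _ _ hj, hk]
    congr 1; push_cast; ring
  have hE : Complex.exp ((π : ℂ) * I * ((1 : ℚ) : ℂ) * (A.1 1 0 : ℂ) *
    ((∑ i, z (.inl i) * z (.inl i) + (∑ i, z (.inl i)) * ∑ i, z (.inl i)) +
    (∑ i, z (.inr i) * z (.inr i) + (∑ i, z (.inr i)) * ∑ i, z (.inr i))) / jA A τ) =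
    Complex.exp ((π : ℂ) * I * (A.1 1 0 : ℂ) / jA A τ *
      (∑ i, z (.inl i) * z (.inl i) + (∑ i, z (.inl i)) * ∑ i, z (.inl i))) *
    Complex.exp ((π : ℂ) * I * (A.1 1 0 : ℂ) / jA A τ *
      (∑ i, z (.inr i) * z (.inr i) + (∑ i, z (.inr i)) * ∑ i, z (.inr i))) := by
    rw [← Complex.exp_add]; congr 1; push_cast; ring
  rw [hE]
  simp only [zpow_ofNat, mul_zero, zero_mul, zero_div, Complex.exp_zero, mul_one] at h24
  set η' := dedekindEta (mA A τ)
  set η := dedekindEta τ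
  set j := jA A τ
  have key : (η' ^ 3 / η ^ 3 * j⁻¹) ^ (a + 1) * (η' ^ 3 / η ^ 3 * j⁻¹) ^ (b + 1) / η' =
      v A * j ^ (k : ℂ) / η := by
    rw [← pow_add, show a + 1 + (b + 1) = a + b + 2 by ring, mul_pow, div_pow, ← pow_mul, ← pow_mul,
      hN, inv_pow]
    rw [show 25 + N = 24 + N + 1 by ring, pow_succ, pow_succ, pow_add, pow_add, h24, hN']
    field_simp
    linear_combination (-(v A)) * hk'
  set E1 := Complex.exp ((π : ℂ) * I * (A.1 1 0 : ℂ) / j *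
      (∑ i, z (.inl i) * z (.inl i) + (∑ i, z (.inl i)) * ∑ i, z (.inl i)))
  set E2 := Complex.exp ((π : ℂ) * I * (A.1 1 0 : ℂ) / j *
      (∑ i, z (.inr i) * z (.inr i) + (∑ i, z (.inr i)) * ∑ i, z (.inr i)))
  set t1 := thetaAm a τ fun x => z (.inl x)
  set t2 := thetaAm b τ fun x => z (.inr x)
  linear_combination (E1 * E2 * t1 * t2) * key

lemma hasSum_mul' {α β : Type*} {f : α → ℂ} {g : β → ℂ} {s t : ℂ}
    (hf : HasSum f s) (hg : HasSum g t) : HasSum (fun x : α × β => f x.1 * g x.2) (s * t) :=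
  hf.mul hg (summable_mul_of_summable_norm hf.summable.norm hg.summable.norm)

lemma hasSum_pi_prod (m : ℕ) (f : Fin m → ℤ → ℂ) (s : Fin m → ℂ) (hf : ∀ i, HasSum (f i) (s i)) :
    HasSum (fun n : Fin m → ℤ => ∏ i, f i (n i)) (∏ i, s i) := by
  induction m with
  | zero => simpa using hasSum_unique (fun n : Fin 0 → ℤ => ∏ i, f i (n i))
  | succ m ih =>
    rw [← (Fin.consEquiv (fun _ => ℤ)).hasSum_iff, Fin.prod_univ_succ]
    have := hasSum_mul' (hf 0) (ih (fun i => f i.succ) (fun i => s i.succ) (fun i => hf _))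
    convert this using 2 with x
    simp [Fin.consEquiv, Fin.prod_univ_succ]

lemma hasSum_push {X Y : Type*} (φ : X → Y) (c : X → ℂ) (E : Y → ℂ) (s : ℂ)
    (h : HasSum (fun x => c x * E (φ x)) s) :
    HasSum (fun y => (∑' x : {x // φ x = y}, c x) * E y) s := by
  refine ((Equiv.sigmaFiberEquiv φ).hasSum_iff.2 h).sigma fun y => ?_
  have hs : Summable (fun x : {x // φ x = y} => c x * E (φ x)) :=
    h.summable.comp_injective Subtype.val_injective
  have : (∑' x : {x // φ x = y}, c x) * E y = ∑' x : {x // φ x = y}, c x * E (φ x) := by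
    rw [← tsum_mul_right]
    exact tsum_congr fun x => by rw [x.2]
  rw [this]
  exact hs.hasSum

lemma eta_inv_expansion : ∃ P : ℕ → ℂ, P 0 = 1 ∧ ∀ τ : ℂ, 0 < τ.im →
    HasSum (fun n : ℕ => P n * Complex.exp (2 * (π : ℂ) * I * (((-1 / 24 + n : ℚ) : ℂ) * τ)))
      (dedekindEta τ)⁻¹ := by
  set F : ℂ → ℂ := fun q => (∏' n : ℕ, (1 - q ^ (n + 1)))⁻¹ with hF
  have hne : ∀ q ∈ Metric.ball (0 : ℂ) 1, ∏' n : ℕ, (1 - q ^ (n + 1)) ≠ 0 := by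
    intro q hq
    have hq' : ‖q‖ < 1 := by simpa using hq
    have := tprod_one_add_ne_zero_of_summable (f := fun n : ℕ => -q ^ (n + 1)) ?_ ?_
    · simpa [sub_eq_add_neg] using this
    · intro i h
      have h1 : q ^ (i + 1) = 1 := by linear_combination -h
      have h2 : ‖q‖ ^ (i + 1) = 1 := by rw [← norm_pow, h1, norm_one]
      have h3 := pow_lt_one₀ (norm_nonneg q) hq' (Nat.succ_ne_zero i)
      exact absurd h2 h3.ne
    · simpa using (summable_nat_add_iff 1).mpr (summable_geometric_of_lt_one (norm_nonneg _) hq')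
  have hd : DifferentiableOn ℂ F (Metric.ball (0 : ℂ) 1) :=
    ModularForm.differentiableOn_tprod_one_sub_pow.inv hne
  refine ⟨fun n => ((n.factorial : ℂ))⁻¹ * iteratedDeriv n F 0, by simp [hF], fun τ hτ => ?_⟩
  set q := Complex.exp (2 * (π : ℂ) * I * τ) with hq
  have hqb : q ∈ Metric.ball (0 : ℂ) 1 := by
    simpa using UpperHalfPlane.norm_exp_two_pi_I_lt_one ⟨τ, hτ⟩
  have h := Complex.hasSum_taylorSeries_on_ball hd hqb
  have h2 := h.mul_right (Complex.exp ((π : ℂ) * I * τ / 12))⁻¹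
  have e : F q * (Complex.exp ((π : ℂ) * I * τ / 12))⁻¹ = (dedekindEta τ)⁻¹ := by
    rw [hF, dedekindEta, mul_inv, mul_comm]
    congr 1
    show (∏' n : ℕ, (1 - q ^ (n + 1)))⁻¹ = _
    congr 1
    refine tprod_congr fun n => ?_
    rw [hq, ← Complex.exp_nat_mul]
    congr 2; push_cast; ring
  rw [e] at h2
  refine h2.congr_fun ?_
  intro n
  rw [sub_zero, hq, ← Complex.exp_nat_mul, ← Complex.exp_neg, smul_eq_mul, smul_eq_mul]
  have : Complex.exp (2 * (π : ℂ) * I * (((-1 / 24 + n : ℚ) : ℂ) * τ)) =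
    Complex.exp (n * (2 * (π : ℂ) * I * τ)) * Complex.exp (-((π : ℂ) * I * τ / 12)) := by
    rw [← Complex.exp_add]; congr 1; push_cast; ring
  rw [this]; ring

/-- coefficients, exponents and dual vectors for the expansion of `thetaAm` -/
def cA (m : ℕ) (x : (Fin m → ℤ) × ℤ) : ℂ := (∏ i, chi4 (x.1 i)) * chi4 x.2
def eA (m : ℕ) (x : (Fin m → ℤ) × ℤ) : ℚ := (∑ i, (x.1 i : ℚ) ^ 2 + (x.2 : ℚ) ^ 2) / 8
def lA (m : ℕ) (x : (Fin m → ℤ) × ℤ) (i : Fin m) : ℚ :=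
  ((x.1 i : ℚ) + x.2) / 2 - (∑ j, ((x.1 j : ℚ) + x.2) / 2) / (m + 1)

lemma sum_lA (m : ℕ) (x : (Fin m → ℤ) × ℤ) :
    ∑ i, lA m x i = (∑ j, ((x.1 j : ℚ) + x.2) / 2) / (m + 1) := by
  have : ((m : ℚ) + 1) ≠ 0 := by positivity
  simp only [lA, Finset.sum_sub_distrib, Finset.sum_const, Finset.card_univ, Fintype.card_fin,
    nsmul_eq_mul]
  field_simp
  ring

lemma lA_pair {R : Type*} [Field R] [CharZero R] (m : ℕ) (x : (Fin m → ℤ) × ℤ) (z : Fin m → R) :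
    ∑ i, (lA m x i : R) * z i + (∑ i, (lA m x i : R)) * ∑ i, z i =
      ∑ i, ((x.1 i : R) + x.2) / 2 * z i := by
  have h : ∑ i, (lA m x i : R) = ((∑ j, ((x.1 j : ℚ) + x.2) / 2) / (m + 1) : ℚ) := by
    rw [← sum_lA]; push_cast; rfl
  rw [h, Finset.mul_sum, ← Finset.sum_add_distrib]
  refine Finset.sum_congr rfl fun i _ => ?_
  rw [lA]; push_cast; ring

lemma hasSum_thetaAm (m : ℕ) (τ : ℂ) (hτ : 0 < τ.im) (z : Fin m → ℂ) :
    HasSum (fun x : (Fin m → ℤ) × ℤ => cA m x * Complex.exp (2 * (π : ℂ) * I *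
      ((eA m x : ℂ) * τ + (∑ i, (lA m x i : ℂ) * z i + (∑ i, (lA m x i : ℂ)) * ∑ i, z i))))
      (thetaAm m τ z) := by
  have h := hasSum_mul' (hasSum_pi_prod m _ _ (fun i => hasSum_thetaTerm τ (z i) hτ))
    (hasSum_thetaTerm τ (∑ i, z i) hτ)
  refine h.congr_fun fun x => ?_
  rw [lA_pair]
  simp only [thetaTerm, Finset.prod_mul_distrib, ← Complex.exp_sum, cA]
  rw [mul_mul_mul_comm, ← Complex.exp_add]
  congr 2
  rw [← Finset.mul_sum, ← mul_add, eA]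
  push_cast
  congr 1
  rw [Finset.sum_add_distrib, ← Finset.sum_div, ← Finset.sum_mul, ← Finset.sum_div]
  have : ∑ i, ((x.1 i : ℂ) + x.2) / 2 * z i = (∑ i, (x.1 i : ℂ) * z i) / 2 +
      x.2 * (∑ i, z i) / 2 := by
    rw [Finset.mul_sum, Finset.sum_div, Finset.sum_div, ← Finset.sum_add_distrib]
    exact Finset.sum_congr rfl fun i _ => by ring
  rw [this]; ring

def sA (m : ℕ) (x : (Fin m → ℤ) × ℤ) : ℤ := ∑ i, x.1 i - x.2

lemma norm_A (m : ℕ) (x : (Fin m → ℤ) × ℤ) :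
    2 * eA m x - (∑ i, lA m x i * lA m x i + (∑ i, lA m x i) * ∑ i, lA m x i) =
      (sA m x : ℚ) ^ 2 / (4 * (m + 1)) := by
  have h := lA_pair (R := ℚ) m x (lA m x)
  simp only [Rat.cast_id] at h
  rw [h]
  have hm : ((m : ℚ) + 1) ≠ 0 := by positivity
  have e1 : ∑ i, ((x.1 i : ℚ) + x.2) / 2 = (∑ i, (x.1 i : ℚ) + m * x.2) / 2 := by
    rw [← Finset.sum_div, Finset.sum_add_distrib]; simp
  have e2 : ∑ i, ((x.1 i : ℚ) + x.2) / 2 * lA m x i = (∑ i, (x.1 i : ℚ) ^ 2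
     + 2 * (∑ i, (x.1 i : ℚ)) * x.2 + m * (x.2 : ℚ) ^ 2) / 4
      - ((∑ i, (x.1 i : ℚ) + m * x.2) / 2) ^ 2 / (m + 1) := by
    simp only [lA, mul_sub, Finset.sum_sub_distrib]
    rw [← Finset.sum_mul, e1]
    have : ∑ i, ((x.1 i : ℚ) + x.2) / 2 * (((x.1 i : ℚ) + x.2) / 2) = (∑ i, (x.1 i : ℚ) ^ 2
     + 2 * (∑ i, (x.1 i : ℚ)) * x.2 + m * (x.2 : ℚ) ^ 2) / 4 := by
      have e : ∀ i, ((x.1 i : ℚ) + x.2) / 2 * (((x.1 i : ℚ) + x.2) / 2) =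
        ((x.1 i : ℚ) ^ 2 + 2 * (x.1 i : ℚ) * x.2 + (x.2 : ℚ) ^ 2) / 4 := fun i => by ring
      simp_rw [e, ← Finset.sum_div, Finset.sum_add_distrib, ← Finset.sum_mul, ← Finset.mul_sum]
      simp
    rw [this]; ring
  rw [e2, eA, sA]
  push_cast
  field_simp
  ring

lemma sA_odd (m : ℕ) (hm : Even m) (x : (Fin m → ℤ) × ℤ) (h : cA m x ≠ 0) : Odd (sA m x) := by
  rw [cA, mul_ne_zero_iff, Finset.prod_ne_zero_iff] at h
  have h1 : Even (∑ i, (x.1 i - 1)) := by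
    refine Finset.even_sum _ fun i _ => ?_
    have := chi4_ne_zero (h.1 i (Finset.mem_univ i))
    rw [Int.even_iff]; omega
  rw [Finset.sum_sub_distrib] at h1
  simp at h1
  have h2 := chi4_ne_zero h.2
  obtain ⟨k, hk⟩ := hm
  obtain ⟨l, hl⟩ := h1
  rw [sA, Int.odd_iff]; omega

lemma sA_sq (m : ℕ) (hm : Even m) (x : (Fin m → ℤ) × ℤ) (h : cA m x ≠ 0) :
    1 ≤ (sA m x : ℚ) ^ 2 := by
  have h1 := sA_odd m hm x h
  have : sA m x ≠ 0 := by rintro h0; rw [h0] at h1; simp at h1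
  have h2 : 1 ≤ sA m x ^ 2 := by
    have : 0 < sA m x ^ 2 := by positivity
    omega
  exact_mod_cast h2

lemma A_unique (m : ℕ) (hm : 2 ≤ m) (x y : (Fin m → ℤ) × ℤ) (hl : lA m x = lA m y)
    (hx : sA m x ^ 2 = 1) (hy : sA m y ^ 2 = 1) : x = y := by
  have hS : ∑ j, ((x.1 j : ℚ) + x.2) / 2 = ∑ j, ((y.1 j : ℚ) + y.2) / 2 := by
    have h := sum_lA m x
    rw [hl, sum_lA m y] at h
    have : ((m : ℚ) + 1) ≠ 0 := by positivity
    field_simp at h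
    linarith
  have hi : ∀ i, x.1 i + x.2 = y.1 i + y.2 := by
    intro i
    have := congrFun hl i
    rw [lA, lA, hS] at this
    have : (x.1 i : ℚ) + x.2 = y.1 i + y.2 := by linarith
    exact_mod_cast this
  have hsum : ∑ i, x.1 i + m * x.2 = ∑ i, y.1 i + m * y.2 := by
    have := Finset.sum_congr (s₁ := Finset.univ) rfl (fun i (_ : i ∈ Finset.univ) => hi i)
    simpa [Finset.sum_add_distrib] using this
  have hs : sA m x - sA m y = (m + 1) * (y.2 - x.2) := by
    rw [sA, sA]; linear_combination hsum
  have hm' : (2 : ℤ) ≤ m := by exact_mod_cast hm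
  have h2 : x.2 = y.2 := by
    have hx' := _root_.sq_eq_one_iff.1 hx
    have hy' := _root_.sq_eq_one_iff.1 hy
    by_contra hne
    rcases lt_or_gt_of_ne hne with hlt | hlt
    · have : (m + 1 : ℤ) * (y.2 - x.2) ≥ 3 := by nlinarith
      rcases hx' with h | h <;> rcases hy' with h' | h' <;> omega
    · have : (m + 1 : ℤ) * (y.2 - x.2) ≤ -3 := by nlinarith
      rcases hx' with h | h <;> rcases hy' with h' | h' <;> omega
  refine Prod.ext (funext fun i => ?_) h2
  have := hi i
  omega

abbrev Idx (a b : ℕ) := (((Fin a → ℤ) × ℤ) × ((Fin b → ℤ) × ℤ)) × ℕ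

def cK (a b : ℕ) (P : ℕ → ℂ) (x : Idx a b) : ℂ := cA a x.1.1 * cA b x.1.2 * P x.2
def pK (a b : ℕ) (x : Idx a b) : ℚ × (Fin a ⊕ Fin b → ℚ) :=
  (eA a x.1.1 + eA b x.1.2 + (-1 / 24 + x.2), Sum.elim (lA a x.1.1) (lA b x.1.2))

lemma hasSum_kap (a b : ℕ) (P : ℕ → ℂ) (hP : ∀ τ : ℂ, 0 < τ.im →
    HasSum (fun n : ℕ => P n * Complex.exp (2 * (π : ℂ) * I * (((-1 / 24 + n : ℚ) : ℂ) * τ)))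
      (dedekindEta τ)⁻¹) (τ : ℂ) (hτ : 0 < τ.im) (z : Fin a ⊕ Fin b → ℂ) :
    HasSum (fun x : Idx a b => cK a b P x * Complex.exp (2 * (π : ℂ) * I *
          (((pK a b x).1 : ℂ) * τ + bilinC (Matrix.fromBlocks (AmGram a) 0 0 (AmGram b))
            (fun i => ((pK a b x).2 i : ℂ)) z))) (kap a b τ z) := by
  have h := hasSum_mul' (hasSum_mul' (hasSum_thetaAm a τ hτ (z ∘ Sum.inl))
    (hasSum_thetaAm b τ hτ (z ∘ Sum.inr))) (hP τ hτ)
  rw [← div_eq_mul_inv] at h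
  refine h.congr_fun fun x => ?_
  rw [bilinC, sum_blocks a b (fun i => ((pK a b x).2 i : ℂ)) z]
  simp only [pK, cK, Sum.elim_inl, Sum.elim_inr, Function.comp_apply]
  symm
  rw [mul_mul_mul_comm (cA a _), mul_mul_mul_comm (cA a _ * cA b _), ← Complex.exp_add, ← Complex.exp_add]
  congr 2
  push_cast
  ring

lemma bilinQ_pK (a b : ℕ) (x : Idx a b) :
    2 * (pK a b x).1 - bilinQ (Matrix.fromBlocks (AmGram a) 0 0 (AmGram b)) (pK a b x).2
      (pK a b x).2 = (sA a x.1.1 : ℚ) ^ 2 / (4 * (a + 1)) + (sA b x.1.2 : ℚ) ^ 2 / (4 * (b + 1))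
        - 1 / 12 + 2 * x.2 := by
  rw [bilinQ, sum_blocks]
  simp only [pK, Sum.elim_inl, Sum.elim_inr]
  linear_combination norm_A a x.1.1 + norm_A b x.1.2

lemma bilinQ_nonneg (a b : ℕ) (l : Fin a ⊕ Fin b → ℚ) :
    0 ≤ bilinQ (Matrix.fromBlocks (AmGram a) 0 0 (AmGram b)) l l := by
  rw [bilinQ, sum_blocks]
  have : ∀ m (u : Fin m → ℚ), 0 ≤ ∑ i, u i * u i + (∑ i, u i) * ∑ i, u i := fun m u =>
    add_nonneg (Finset.sum_nonneg fun i _ => mul_self_nonneg _) (mul_self_nonneg _)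
  exact add_nonneg (this a fun i => l (.inl i)) (this b fun i => l (.inr i))

lemma halfDual (a b : ℕ) (x : Idx a b) :
    InHalfDual (Matrix.fromBlocks (AmGram a) 0 0 (AmGram b)) (pK a b x).2 := by
  intro y
  rw [bilinQ, sum_blocks a b (pK a b x).2 (fun i => (y i : ℚ))]
  simp only [pK, Sum.elim_inl, Sum.elim_inr]
  have h1 := lA_pair (R := ℚ) a x.1.1 (fun i => (y (.inl i) : ℚ))
  have h2 := lA_pair (R := ℚ) b x.1.2 (fun i => (y (.inr i) : ℚ))
  simp only [Rat.cast_id] at h1 h2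
  rw [h1, h2]
  refine ⟨∑ i, (x.1.1.1 i + x.1.1.2) * y (.inl i) + ∑ i, (x.1.2.1 i + x.1.2.2) * y (.inr i), ?_⟩
  push_cast
  rw [mul_add, Finset.mul_sum, Finset.mul_sum]
  congr 1 <;> exact Finset.sum_congr rfl fun i _ => by ring

theorem kap_main (a b N : ℕ) (ha : Even a) (hb : Even b) (ha2 : 2 ≤ a) (hb2 : 2 ≤ b)
    (hN : 3 * (a + b + 2) = 25 + N) (k : ℚ)
    (hk : k = N / 2 + 12 - (a + b + 2)) (v : SL2Z → ℂ)
    (hv : ∀ A : SL2Z, ∀ τ : ℂ, 0 < τ.im → dedekindEta (mA A τ) ^ N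
        = v A * (jA A τ) ^ (((N : ℕ) : ℂ) / 2) * dedekindEta τ ^ N)
    (δ : ℚ) (hδ : 0 < δ) (hδ' : δ = 1 / (4 * (a + 1)) + 1 / (4 * (b + 1)) - 1 / 12)
    (u : Fin a → ℤ) (hu : ∀ i, u i % 2 = 1) (hu0 : ∑ i, u i = 0)
    (w : Fin b → ℤ) (hw : ∀ i, w i % 2 = 1) (hw0 : ∑ i, w i = 0) :
    ∃ g : ℚ × (Fin a ⊕ Fin b → ℚ) → ℂ,
      IsJacobiForm (Matrix.fromBlocks (AmGram a) 0 0 (AmGram b)) k 1 v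
        (fun _ _ => 1) g (kap a b) ∧
      (∀ p, g p ≠ 0 → δ ≤ 2 * p.1
          - bilinQ (Matrix.fromBlocks (AmGram a) 0 0 (AmGram b)) p.2 p.2) ∧
      (∃ p, g p ≠ 0 ∧ 2 * p.1
          - bilinQ (Matrix.fromBlocks (AmGram a) 0 0 (AmGram b)) p.2 p.2 = δ) := by
  obtain ⟨P, hP0, hP⟩ := eta_inv_expansion
  have hpa : (0 : ℚ) < 4 * (a + 1) := by positivity
  have hpb : (0 : ℚ) < 4 * (b + 1) := by positivity
  have hsupp : ∀ p, (∑' x : {x // pK a b x = p}, cK a b P x) ≠ 0 →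
      ∃ x, pK a b x = p ∧ cK a b P x ≠ 0 := by
    intro p hp
    by_contra! h
    exact hp (by simp [tsum_congr fun x : {x // pK a b x = p} => h x.1 x.2])
  have hlow : ∀ x, cK a b P x ≠ 0 → 1 ≤ (sA a x.1.1 : ℚ) ^ 2 ∧ 1 ≤ (sA b x.1.2 : ℚ) ^ 2 := by
    intro x hx
    rw [cK, mul_ne_zero_iff, mul_ne_zero_iff] at hx
    exact ⟨sA_sq a ha _ hx.1.1, sA_sq b hb _ hx.1.2⟩
  have hmin : ∀ p, (∑' x : {x // pK a b x = p}, cK a b P x) ≠ 0 → δ ≤ 2 * p.1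
          - bilinQ (Matrix.fromBlocks (AmGram a) 0 0 (AmGram b)) p.2 p.2 := by
    intro p hp
    obtain ⟨x, rfl, hx⟩ := hsupp p hp
    obtain ⟨h1, h2⟩ := hlow x hx
    rw [bilinQ_pK, hδ']
    have h3 := (div_le_div_iff_of_pos_right hpa).2 h1
    have h4 := (div_le_div_iff_of_pos_right hpb).2 h2
    have h5 : (0 : ℚ) ≤ x.2 := by positivity
    linarith
  refine ⟨fun p => ∑' x : {x // pK a b x = p}, cK a b P x, ⟨kap_holo a b, ?_, ?_, ?_, ?_⟩, hmin, ?_⟩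
  · intro A τ hτ z
    exact kap_mod a b N hN k hk v hv A τ hτ z
  · intro x y τ hτ z
    exact kap_ell a b x y τ z
  · intro p hp
    have h := hmin p hp
    have hb := bilinQ_nonneg a b p.2
    refine ⟨by linarith, ?_, by linarith⟩
    obtain ⟨x, rfl, hx⟩ := hsupp p hp
    exact halfDual a b x
  · intro τ hτ z
    exact hasSum_push (pK a b) (cK a b P) (fun p => Complex.exp (2 * (π : ℂ) * I *
          ((p.1 : ℂ) * τ + bilinC (Matrix.fromBlocks (AmGram a) 0 0 (AmGram b))
            (fun i => (p.2 i : ℂ)) z))) _ (hasSum_kap a b P hP τ hτ z)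
  · let x0 : Idx a b := (((u, 1), (w, 1)), 0)
    have hs1 : sA a x0.1.1 = -1 := by simp [sA, x0, hu0]
    have hs2 : sA b x0.1.2 = -1 := by simp [sA, x0, hw0]
    have hnorm := bilinQ_pK a b x0
    have hval : 2 * (pK a b x0).1 - bilinQ (Matrix.fromBlocks (AmGram a) 0 0 (AmGram b))
        (pK a b x0).2 (pK a b x0).2 = δ := by
      rw [hnorm, hs1, hs2, hδ']; simp [x0]
    refine ⟨pK a b x0, ?_, hval⟩
    have huniq : ∀ x : {x // pK a b x = pK a b x0}, x ≠ ⟨x0, rfl⟩ → cK a b P x = 0 := by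
      rintro ⟨x, hx⟩ hne
      by_contra hc
      apply hne
      obtain ⟨h1, h2⟩ := hlow x hc
      have hxn := bilinQ_pK a b x
      rw [hx, hval, hδ'] at hxn
      have h3 := (div_le_div_iff_of_pos_right hpa).2 h1
      have h4 := (div_le_div_iff_of_pos_right hpb).2 h2
      have h5 : (0 : ℚ) ≤ x.2 := by positivity
      have h6 : (x.2 : ℚ) = 0 := by linarith
      have h7 : (sA a x.1.1 : ℚ) ^ 2 / (4 * (a + 1)) = 1 / (4 * (a + 1)) := by linarith
      have h8 : (sA b x.1.2 : ℚ) ^ 2 / (4 * (b + 1)) = 1 / (4 * (b + 1)) := by linarith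
      rw [div_left_inj' hpa.ne'] at h7
      rw [div_left_inj' hpb.ne'] at h8
      have h2' := congrArg Prod.snd hx
      simp only [pK] at h2'
      have e1 : x.1.1 = x0.1.1 := by
        refine A_unique a ha2 _ _ (funext fun i => ?_) (by exact_mod_cast h7) (by rw [hs1]; norm_num)
        simpa using congrFun h2' (.inl i)
      have e2 : x.1.2 = x0.1.2 := by
        refine A_unique b hb2 _ _ (funext fun i => ?_) (by exact_mod_cast h8) (by rw [hs2]; norm_num)
        simpa using congrFun h2' (.inr i)
      have e3 : x.2 = x0.2 := by simpa [x0] using h6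
      exact Subtype.ext (Prod.ext (Prod.ext e1 e2) e3)
    simp only
    rw [tsum_eq_single _ huniq]
    simp only [cK, cA, x0, hP0, mul_one]
    refine mul_ne_zero (mul_ne_zero ?_ ?_) (mul_ne_zero ?_ ?_)
    · exact Finset.prod_ne_zero_iff.2 fun i _ => chi4_odd_ne (hu i)
    · exact chi4_odd_ne rfl
    · exact Finset.prod_ne_zero_iff.2 fun i _ => chi4_odd_ne (hw i)
    · exact chi4_odd_ne rfl


/-- `κ_{2A₄}` is a Jacobi cusp form of critical weight `9/2` and index `1`
for `2A₄` with multiplier system `v_η^5`, of order exactly `1/60`; and `κ_{A₄⊕A₆}` is a Jacobi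
cusp form of critical weight `11/2` and index `1` for `A₄⊕A₆` with multiplier system
`v_η^{11}`, of order exactly `1/420`. -/
theorem statement16
    (vη5 vη11 : SL2Z → ℂ)
    (hvη5 : ∀ A : SL2Z, ∀ τ : ℂ, 0 < τ.im →
      dedekindEta (((A.1 0 0 : ℂ) * τ + (A.1 0 1 : ℂ))
            / ((A.1 1 0 : ℂ) * τ + (A.1 1 1 : ℂ))) ^ (5 : ℕ)
        = vη5 A * ((A.1 1 0 : ℂ) * τ + (A.1 1 1 : ℂ)) ^ (((5 : ℕ) : ℂ) / 2)
          * dedekindEta τ ^ (5 : ℕ))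
    (hvη11 : ∀ A : SL2Z, ∀ τ : ℂ, 0 < τ.im →
      dedekindEta (((A.1 0 0 : ℂ) * τ + (A.1 0 1 : ℂ))
            / ((A.1 1 0 : ℂ) * τ + (A.1 1 1 : ℂ))) ^ (11 : ℕ)
        = vη11 A * ((A.1 1 0 : ℂ) * τ + (A.1 1 1 : ℂ)) ^ (((11 : ℕ) : ℂ) / 2)
          * dedekindEta τ ^ (11 : ℕ)) :
    (∃ g : ℚ × (Fin 4 ⊕ Fin 4 → ℚ) → ℂ,
      IsJacobiForm (Matrix.fromBlocks (AmGram 4) 0 0 (AmGram 4)) (9 / 2) 1 vη5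
        (fun _ _ => 1) g kappa2A4 ∧
      (∀ p, g p ≠ 0 → 1 / 60 ≤ 2 * p.1
          - bilinQ (Matrix.fromBlocks (AmGram 4) 0 0 (AmGram 4)) p.2 p.2) ∧
      (∃ p, g p ≠ 0 ∧ 2 * p.1
          - bilinQ (Matrix.fromBlocks (AmGram 4) 0 0 (AmGram 4)) p.2 p.2 = 1 / 60)) ∧
    (∃ g : ℚ × (Fin 4 ⊕ Fin 6 → ℚ) → ℂ,
      IsJacobiForm (Matrix.fromBlocks (AmGram 4) 0 0 (AmGram 6)) (11 / 2) 1 vη11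
        (fun _ _ => 1) g kappaA4A6 ∧
      (∀ p, g p ≠ 0 → 1 / 420 ≤ 2 * p.1
          - bilinQ (Matrix.fromBlocks (AmGram 4) 0 0 (AmGram 6)) p.2 p.2) ∧
      (∃ p, g p ≠ 0 ∧ 2 * p.1
          - bilinQ (Matrix.fromBlocks (AmGram 4) 0 0 (AmGram 6)) p.2 p.2 = 1 / 420)) := by
  refine ⟨?_, ?_⟩
  · exact kap_main 4 4 5 (by decide) (by decide) (by norm_num) (by norm_num) (by norm_num)
      (9 / 2) (by norm_num) vη5 hvη5 (1 / 60) (by norm_num) (by norm_num)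
      ![1, 1, -1, -1] (by decide) (by decide) ![1, 1, -1, -1] (by decide) (by decide)
  · exact kap_main 4 6 11 (by decide) (by decide) (by norm_num) (by norm_num) (by norm_num)
      (11 / 2) (by norm_num) vη11 hvη11 (1 / 420) (by norm_num) (by norm_num)
      ![1, 1, -1, -1] (by decide) (by decide) ![1, 1, 1, -1, -1, -1] (by decide) (by decide)
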